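/- Let c ≥ 7 and let J ⊆ S = ℚ[x_i : i ∈ ℤ/cℤ] be generated by the quadrics x_i x_j (cyclic distance ≥ 3) and x_i² − x_{i−1}x_{i−3}. For each d ≥ 0, let H(d) be the ℚ-dimension of the quotient of the space of homogeneous degree-d polynomials by its intersection with J. Then H(0) = 1, H(1) = c, H(2) = 2c, H(3) = c, H(4) = 1, and H(d) = 0 for d ≥ 5; i.e., the quadratic ring S/J has h-vector (1, c, 2c, c, 1). -/

import Mathlib

/-!
Write `R = S/J`, `a i = x_i x_{i+1}`, `b i = x_i x_{i+2}`, `m i = x_i x_{i+1} x_{i+2}` and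
`t i = m i * x_{i+2}`.

*Upper bounds.* The relations give `x_i ^ 2 x_{i+1} = x_i ^ 2 x_{i+2} = 0`, while
`x_{i+3} ^ 2 x_{i+1} = m i = x_{i+4} ^ 2 x_{i+3}`. Hence the `a i`, `b i` span degree 2, the `m i`
span degree 3, and in degree 4 the only nonzero product of some `m i` with a variable is `t i`.
Moreover `t (i + 1) = t i`, so degree 4 is spanned by `t 0`, and `x_i * t 0 = x_i * t i = 0`
kills degree 5.

*Lower bounds.* The linear functional `φ` on `S` that takes the value `1` on the monomials
`x_k ^ 2 x_{k-1} x_{k-2}` and `0` on all others vanishes on `J`, so it descends to a functional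
`ψ` on `R`, which takes the value `1` on `t 0`. (It is contraction against the Macaulay dual generator of `S/J`.)
The spanning families pair perfectly under `(u, v) ↦ ψ (u * v)`: `x_{i+2}` is dual to `m i` and
`a i` is dual to `b (i - 1)`. Therefore these families are linearly independent.
-/

open MvPolynomial

/-- The ideal `J` of `ℚ[x_i : i ∈ ℤ/cℤ]` generated by the monomials `x_i x_j` for
pairs of cyclic distance `≥ 3` together with the binomials `x_i² − x_{i−1} x_{i−3}`. -/
noncomputable def cyclicQuadricIdeal (c : ℕ) [NeZero c] : Ideal (MvPolynomial (ZMod c) ℚ) :=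
  Ideal.span
    ({p | ∃ i j : ZMod c, 3 ≤ (i - j).val ∧ 3 ≤ (j - i).val ∧ p = X i * X j} ∪
     {p | ∃ i : ZMod c, p = X i ^ 2 - X (i - 1) * X (i - 3)})

/-- `H(d)`: the `ℚ`-dimension of the degree-`d` component of `S/J`, i.e. of the image
of the space of homogeneous degree-`d` polynomials in `S/J` (equivalently, of the
quotient of that space by its intersection with `J`). -/
noncomputable def hilbFun (c : ℕ) [NeZero c] (d : ℕ) : ℕ :=
  Module.finrank ℚ
    ((homogeneousSubmodule (ZMod c) ℚ d).map
      (Ideal.Quotient.mkₐ ℚ (cyclicQuadricIdeal c)).toLinearMap)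

namespace CyclicQuadric

/-! ### Consequences of the relations -/

/-- A cyclic family in a commutative ring satisfying the defining relations of `S/J`. The
`near` field says that `x i * x j` vanishes unless `i` and `j` are at cyclic distance at most `2`;
`far3` and `far4` are the vanishing products that recur in calculations. -/
structure Rel {c : ℕ} {R : Type*} [CommRing R] (x : ZMod c → R) : Prop where
  near : ∀ i j, x i * x j = 0 ∨ j = i ∨ j = i + 1 ∨ j = i + 2 ∨ i = j + 1 ∨ i = j + 2
  far3 : ∀ i, x i * x (i + 3) = 0
  far4 : ∀ i, x i * x (i + 4) = 0
  sq : ∀ i, x (i + 3) ^ 2 = x i * x (i + 2)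

variable {c : ℕ} {R : Type*} [CommRing R] {x : ZMod c → R}

/-- The product of two neighbouring variables. -/
def a (x : ZMod c → R) (i : ZMod c) : R := x i * x (i + 1)

/-- The product of two variables at distance two. -/
def b (x : ZMod c → R) (i : ZMod c) : R := x i * x (i + 2)

/-- The product of three consecutive variables. -/
def m (x : ZMod c → R) (i : ZMod c) : R := x i * x (i + 1) * x (i + 2)

/-- The socle element `x_i x_{i+1} x_{i+2} ^ 2`; it does not depend on `i`, see `Rel.t_eq`. -/
def t (x : ZMod c → R) (i : ZMod c) : R := x i * x (i + 1) * x (i + 2) ^ 2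

namespace Rel

theorem sq_succ (h : Rel x) (i : ZMod c) : x i ^ 2 * x (i + 1) = 0 := by
  obtain ⟨k, rfl⟩ : ∃ k, i = k + 3 := ⟨i - 3, by ring⟩
  rw [show k + 3 + 1 = k + 4 by ring]
  linear_combination x (k + 4) * h.sq k + x (k + 2) * h.far4 k

theorem sq_succ_succ (h : Rel x) (i : ZMod c) : x i ^ 2 * x (i + 2) = 0 := by
  obtain ⟨k, rfl⟩ : ∃ k, i = k + 3 := ⟨i - 3, by ring⟩
  have h3 := h.far3 (k + 2)
  rw [show k + 2 + 3 = k + 5 by ring] at h3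
  rw [show k + 3 + 2 = k + 5 by ring]
  linear_combination x (k + 5) * h.sq k + x k * h3

theorem m_eq (h : Rel x) (i : ZMod c) : x (i + 1) * x (i + 3) ^ 2 = m x i := by
  unfold m
  linear_combination x (i + 1) * h.sq i

theorem m_eq' (h : Rel x) (i : ZMod c) : x (i + 3) * x (i + 4) ^ 2 = m x i := by
  have h1 := h.sq (i + 1)
  rw [show i + 1 + 3 = i + 4 by ring, show i + 1 + 2 = i + 3 by ring] at h1
  linear_combination x (i + 3) * h1 + h.m_eq i

theorem t_succ (h : Rel x) (i : ZMod c) : t x (i + 1) = t x i := by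
  unfold t
  rw [show i + 1 + 1 = i + 2 by ring, show i + 1 + 2 = i + 3 by ring]
  linear_combination x (i + 1) * x (i + 2) * h.sq i

theorem t_eq [NeZero c] (h : Rel x) (i : ZMod c) : t x i = t x 0 := by
  rw [← ZMod.natCast_zmod_val i]
  induction i.val with
  | zero => simp
  | succ n ih => rw [Nat.cast_succ, h.t_succ, ih]

/-! ### Multiplication by a variable -/

theorem x_mul_x (h : Rel x) (i j : ZMod c) :
    x i * x j = 0 ∨ (∃ k, x i * x j = a x k) ∨ ∃ k, x i * x j = b x k := by
  rcases h.near i j with h0 | rfl | rfl | rfl | rfl | rfl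
  · exact .inl h0
  · refine .inr (.inr ⟨j - 3, ?_⟩)
    have := h.sq (j - 3)
    rw [sub_add_cancel] at this
    rw [← pow_two, this, b]
  · exact .inr (.inl ⟨i, rfl⟩)
  · exact .inr (.inr ⟨i, rfl⟩)
  · exact .inr (.inl ⟨j, mul_comm _ _⟩)
  · exact .inr (.inr ⟨j, mul_comm _ _⟩)

theorem x_mul_a (h : Rel x) (i j : ZMod c) : x i * a x j = 0 ∨ ∃ k, x i * a x j = m x k := by
  unfold a
  rcases h.near i j with h0 | rfl | rfl | rfl | rfl | rfl
  · left; linear_combination x (j + 1) * h0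
  · left; linear_combination h.sq_succ j
  · right; refine ⟨i, ?_⟩
    rw [m, show i + 1 + 1 = i + 2 by ring]; ring
  · left
    rw [show i + 2 + 1 = i + 3 by ring]
    linear_combination x (i + 2) * h.far3 i
  · right; refine ⟨j - 3, ?_⟩
    have := h.m_eq' (j - 3)
    rw [sub_add_cancel, show j - 3 + 4 = j + 1 by ring] at this
    linear_combination this
  · right; refine ⟨j, ?_⟩
    rw [m]; ring

theorem x_mul_b (h : Rel x) (i j : ZMod c) : x i * b x j = 0 ∨ ∃ k, x i * b x j = m x k := by
  unfold b
  rcases h.near i j with h0 | rfl | rfl | rfl | rfl | rfl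
  · left; linear_combination x (j + 2) * h0
  · left; linear_combination h.sq_succ_succ j
  · left
    rw [show i + 1 + 2 = i + 3 by ring]
    linear_combination x (i + 1) * h.far3 i
  · left
    rw [show i + 2 + 2 = i + 4 by ring]
    linear_combination x (i + 2) * h.far4 i
  · right; refine ⟨j, ?_⟩
    rw [m]; ring
  · right; refine ⟨j - 1, ?_⟩
    have := h.m_eq (j - 1)
    rw [sub_add_cancel, show j - 1 + 3 = j + 2 by ring] at this
    linear_combination this

theorem x_mul_m [NeZero c] (h : Rel x) (i j : ZMod c) :
    (i = j + 2 ∧ x i * m x j = t x 0) ∨ x i * m x j = 0 := by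
  unfold m
  rcases h.near i j with h0 | rfl | rfl | rfl | rfl | rfl
  · right; linear_combination x (j + 1) * x (j + 2) * h0
  · right; linear_combination x (j + 2) * h.sq_succ j
  · right
    rw [show i + 1 + 2 = i + 3 by ring]
    linear_combination x (i + 1) * x (i + 1 + 1) * h.far3 i
  · right
    rw [show i + 2 + 2 = i + 4 by ring]
    linear_combination x (i + 2) * x (i + 2 + 1) * h.far4 i
  · right
    have := h.sq_succ (j + 1)
    rw [show j + 1 + 1 = j + 2 by ring] at this
    linear_combination x j * this
  · left
    refine ⟨rfl, ?_⟩
    rw [← h.t_eq j, t]; ring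

theorem x_mul_m_self [NeZero c] (h : Rel x) (j : ZMod c) : x (j + 2) * m x j = t x 0 := by
  rw [← h.t_eq j, t, m]; ring

theorem x_mul_t [NeZero c] (h : Rel x) (i : ZMod c) : x i * t x 0 = 0 := by
  rw [← h.t_eq i, t]
  linear_combination x (i + 2) ^ 2 * h.sq_succ i

/-! ### The pairing in degree two -/

theorem a_mul_a (h : Rel x) (i j : ZMod c) : a x i * a x j = 0 := by
  have key : ∀ i, a x i * a x (i + 1) = 0 := fun i ↦ by
    have := h.sq_succ (i + 1)
    unfold a
    linear_combination x i * this
  have key2 : ∀ i, a x i * a x (i + 2) = 0 := fun i ↦ by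
    unfold a
    rw [show i + 2 + 1 = i + 3 by ring]
    linear_combination x (i + 1) * x (i + 2) * h.far3 i
  rcases h.near i j with h0 | rfl | rfl | rfl | rfl | rfl
  · unfold a; linear_combination x (i + 1) * x (j + 1) * h0
  · unfold a; linear_combination x (j + 1) * h.sq_succ j
  · exact key i
  · exact key2 i
  · rw [mul_comm, key]
  · rw [mul_comm, key2]

theorem b_mul_b (h : Rel x) (i j : ZMod c) : b x i * b x j = 0 := by
  have key : ∀ i, b x i * b x (i + 1) = 0 := fun i ↦ by
    unfold b
    rw [show i + 1 + 2 = i + 3 by ring]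
    linear_combination x (i + 1) * x (i + 2) * h.far3 i
  have key2 : ∀ i, b x i * b x (i + 2) = 0 := fun i ↦ by
    unfold b
    rw [show i + 2 + 2 = i + 4 by ring]
    linear_combination x (i + 2) ^ 2 * h.far4 i
  rcases h.near i j with h0 | rfl | rfl | rfl | rfl | rfl
  · unfold b; linear_combination x (i + 2) * x (j + 2) * h0
  · unfold b; linear_combination x (j + 2) * h.sq_succ_succ j
  · exact key i
  · exact key2 i
  · rw [mul_comm, key]
  · rw [mul_comm, key2]

theorem b_mul_a_self [NeZero c] (h : Rel x) (i : ZMod c) : b x i * a x (i + 1) = t x 0 := by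
  rw [← h.t_eq i, b, a, t, show i + 1 + 1 = i + 2 by ring]; ring

theorem b_mul_a (h : Rel x) (i j : ZMod c) : j = i + 1 ∨ b x i * a x j = 0 := by
  unfold a b
  rcases h.near i j with h0 | rfl | rfl | rfl | rfl | rfl
  · right; linear_combination x (i + 2) * x (j + 1) * h0
  · right; linear_combination x (j + 2) * h.sq_succ j
  · exact .inl rfl
  · right
    rw [show i + 2 + 1 = i + 3 by ring]
    linear_combination x (i + 2) ^ 2 * h.far3 i
  · right
    rw [show j + 1 + 2 = j + 3 by ring]
    linear_combination x (j + 1) ^ 2 * h.far3 j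
  · right
    rw [show j + 2 + 2 = j + 4 by ring]
    linear_combination x (j + 2) * x (j + 1) * h.far4 j

end Rel

/-! ### Dimensions from spanning families and a pairing -/

section Graded

variable [Algebra ℚ R]

/-- A family admitting a dual family under `(u, v) ↦ ψ (u * v)` is linearly independent, so the
dimension of its span is the number of its members. -/
theorem finrank_span_of_dual {ι : Type*} [Fintype ι] [DecidableEq ι] (ψ : R →ₗ[ℚ] ℚ)
    (v w : ι → R) (h : ∀ i j, ψ (v i * w j) = if i = j then 1 else 0) :
    Module.finrank ℚ (Submodule.span ℚ (Set.range v)) = Fintype.card ι := by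
  refine finrank_span_eq_card ?_
  let L : R →ₗ[ℚ] (ι → ℚ) := LinearMap.pi fun j ↦ ψ ∘ₗ LinearMap.mulRight ℚ (w j)
  refine LinearIndependent.of_comp L ?_
  convert Pi.linearIndependent_single_one ι ℚ using 1
  funext i
  funext j
  simp [L, h, Pi.single_apply, eq_comm]

/-- The degree-`d` component of the algebra generated by the family `x`. -/
noncomputable def W (x : ZMod c → R) (d : ℕ) : Submodule ℚ R :=
  Submodule.span ℚ (Set.range x) ^ d

theorem W_succ (d : ℕ) {ι : Type*} {v : ι → R} (hd : W x d = Submodule.span ℚ (Set.range v)) :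
    W x (d + 1) = Submodule.span ℚ (Set.range fun p : ZMod c × ι ↦ x p.1 * v p.2) := by
  rw [W, pow_succ', ← W, hd, Submodule.span_mul_span]
  congr 1
  ext r
  simp [Set.mem_mul]

theorem span_eq_of {ι κ : Type*} {u : ι → R} {v : κ → R}
    (h1 : ∀ i, u i = 0 ∨ ∃ k, u i = v k) (h2 : ∀ k, ∃ i, u i = v k) :
    Submodule.span ℚ (Set.range u) = Submodule.span ℚ (Set.range v) := by
  apply le_antisymm <;> rw [Submodule.span_le]
  · rintro _ ⟨i, rfl⟩
    rcases h1 i with h | ⟨k, h⟩ <;> rw [h]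
    · exact zero_mem _
    · exact Submodule.subset_span ⟨k, rfl⟩
  · rintro _ ⟨k, rfl⟩
    obtain ⟨i, h⟩ := h2 k
    exact Submodule.subset_span ⟨i, h⟩

theorem W_zero : W x 0 = Submodule.span ℚ (Set.range fun _ : Unit ↦ (1 : R)) := by
  simp [W, Submodule.one_eq_span]

theorem W_one : W x 1 = Submodule.span ℚ (Set.range x) := pow_one _

theorem W_two (h : Rel x) : W x 2 = Submodule.span ℚ (Set.range (Sum.elim (a x) (b x))) := by
  rw [W_succ 1 W_one]
  apply span_eq_of
  · rintro ⟨i, j⟩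
    rcases h.x_mul_x i j with h | ⟨k, h⟩ | ⟨k, h⟩
    · exact .inl h
    · exact .inr ⟨.inl k, h⟩
    · exact .inr ⟨.inr k, h⟩
  · rintro (k | k)
    · exact ⟨(k, k + 1), rfl⟩
    · exact ⟨(k, k + 2), rfl⟩

theorem W_three (h : Rel x) : W x 3 = Submodule.span ℚ (Set.range (m x)) := by
  rw [W_succ 2 (W_two h)]
  apply span_eq_of
  · rintro ⟨i, j | j⟩
    · exact h.x_mul_a i j
    · exact h.x_mul_b i j
  · intro k
    refine ⟨(k + 2, .inl k), ?_⟩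
    simp only [Sum.elim_inl, a, m]; ring

theorem W_four [NeZero c] (h : Rel x) :
    W x 4 = Submodule.span ℚ (Set.range fun _ : Unit ↦ t x 0) := by
  rw [W_succ 3 (W_three h)]
  apply span_eq_of
  · rintro ⟨i, j⟩
    rcases h.x_mul_m i j with ⟨-, h⟩ | h
    · exact .inr ⟨(), h⟩
    · exact .inl h
  · intro k
    exact ⟨(0 + 2, 0), h.x_mul_m_self 0⟩

theorem W_ge_five [NeZero c] (h : Rel x) (d : ℕ) (hd : 5 ≤ d) : W x d = ⊥ := by
  have h5 : W x 5 = ⊥ := by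
    rw [W_succ 4 (W_four h)]
    simp [h.x_mul_t]
  obtain ⟨e, rfl⟩ := Nat.exists_eq_add_of_le hd
  rw [W, pow_add, ← W, h5, Submodule.bot_mul]

theorem finrank_W [NeZero c] (h : Rel x) (ψ : R →ₗ[ℚ] ℚ) (hψ : ψ (t x 0) = 1) :
    Module.finrank ℚ (W x 0) = 1 ∧ Module.finrank ℚ (W x 1) = c ∧
    Module.finrank ℚ (W x 2) = 2 * c ∧ Module.finrank ℚ (W x 3) = c ∧
    Module.finrank ℚ (W x 4) = 1 ∧ ∀ d, 5 ≤ d → Module.finrank ℚ (W x d) = 0 := by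
  refine ⟨?_, ?_, ?_, ?_, ?_, fun d hd ↦ by rw [W_ge_five h d hd, finrank_bot]⟩
  · rw [W_zero, finrank_span_of_dual ψ _ (fun _ ↦ t x 0)] <;> simp [hψ]
  · rw [W_one, finrank_span_of_dual ψ _ (fun j ↦ m x (j - 2)), ZMod.card]
    intro i j
    split_ifs with hij
    · subst hij
      have := h.x_mul_m_self (i - 2)
      rw [sub_add_cancel] at this
      rw [this, hψ]
    · rcases h.x_mul_m i (j - 2) with ⟨h1, -⟩ | h1
      · exact absurd (by rw [h1]; ring) hij
      · rw [h1, map_zero]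
  · have key : ∀ i j, ψ (b x i * a x j) = if j = i + 1 then 1 else 0 := fun i j ↦ by
      split_ifs with hij
      · rw [hij, h.b_mul_a_self, hψ]
      · rw [(h.b_mul_a i j).resolve_left hij, map_zero]
    rw [W_two h, finrank_span_of_dual ψ _
      (Sum.elim (fun j ↦ b x (j - 1)) (fun j ↦ a x (j + 1))), Fintype.card_sum, ZMod.card, two_mul]
    rintro (i | i) (j | j)
    · simp [mul_comm (a x i), key]
    · simp [h.a_mul_a]
    · simp [h.b_mul_b]
    · simp [key, eq_comm]
  · rw [W_three h, finrank_span_of_dual ψ _ (fun j ↦ x (j + 2)), ZMod.card]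
    intro i j
    rw [mul_comm]
    split_ifs with hij
    · rw [hij, h.x_mul_m_self, hψ]
    · rcases h.x_mul_m (j + 2) i with ⟨h1, -⟩ | h1
      · exact absurd (add_right_cancel h1).symm hij
      · rw [h1, map_zero]
  · rw [W_four h, finrank_span_of_dual ψ _ (fun _ ↦ 1)] <;> simp [hψ]

end Graded

/-! ### The relations in the quotient -/

theorem natCast_ne_zero (hc : 7 ≤ c) (n : ℕ) (h0 : 0 < n) (h7 : n < 7) : (n : ZMod c) ≠ 0 := by
  rw [Ne, ZMod.natCast_eq_zero_iff]
  exact fun h ↦ absurd (Nat.le_of_dvd h0 h) (by omega)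

theorem val_lt_three [NeZero c] (i j : ZMod c) (h : (i - j).val < 3) :
    i = j ∨ i = j + 1 ∨ i = j + 2 := by
  have hv := ZMod.natCast_zmod_val (i - j)
  interval_cases (i - j).val
  · left; push_cast at hv; linear_combination -hv
  · right; left; push_cast at hv; linear_combination -hv
  · right; right; push_cast at hv; linear_combination -hv

theorem val_natCast_eq (hc : 7 ≤ c) (i j : ZMod c) (n : ℕ) (hn : n < 7) (h : i = j + n) :
    (i - j).val = n := by
  rw [h, add_sub_cancel_left, ZMod.val_natCast_of_lt (by omega)]

/-- Two indices in a common window `{k - 2, k - 1, k}` do not satisfy the distance hypothesis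
of the monomial generators. -/
theorem not_far_of_window (hc : 7 ≤ c) (i j k : ZMod c) (h1 : 3 ≤ (i - j).val)
    (h2 : 3 ≤ (j - i).val) (hi : k = i ∨ k - 1 = i ∨ k - 2 = i)
    (hj : k = j ∨ k - 1 = j ∨ k - 2 = j) : False := by
  have key : ∀ n < 3, i ≠ j + (n : ℕ) ∧ j ≠ i + (n : ℕ) := fun n hn ↦
    ⟨fun h ↦ by have := val_natCast_eq hc i j n (by omega) h; omega,
      fun h ↦ by have := val_natCast_eq hc j i n (by omega) h; omega⟩
  have k0 := key 0 (by omega)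
  have k1 := key 1 (by omega)
  have k2 := key 2 (by omega)
  push_cast at k0 k1 k2
  grind

open scoped Classical in
theorem rel_quotient (hc : 7 ≤ c) [NeZero c] :
    Rel fun i : ZMod c ↦ Ideal.Quotient.mkₐ ℚ (cyclicQuadricIdeal c) (X i) := by
  have far : ∀ i j : ZMod c, 3 ≤ (i - j).val → 3 ≤ (j - i).val →
      Ideal.Quotient.mkₐ ℚ (cyclicQuadricIdeal c) (X i) *
        Ideal.Quotient.mkₐ ℚ (cyclicQuadricIdeal c) (X j) = 0 := fun i j h1 h2 ↦ by
    rw [← map_mul, Ideal.Quotient.mkₐ_eq_mk, Ideal.Quotient.eq_zero_iff_mem]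
    exact Ideal.subset_span (.inl ⟨i, j, h1, h2, rfl⟩)
  have val_neg : ∀ (i : ZMod c) (n : ℕ), 0 < n → n ≤ 4 → 3 ≤ (i - (i + n)).val := fun i n h h' ↦ by
    rw [show i - (i + n) = ((c - n : ℕ) : ZMod c) by
      rw [Nat.cast_sub (by omega)]; simp, ZMod.val_natCast_of_lt (by omega)]
    omega
  refine ⟨fun i j ↦ ?_, fun i ↦ ?_, fun i ↦ ?_, fun i ↦ ?_⟩
  · by_cases h1 : 3 ≤ (i - j).val
    · by_cases h2 : 3 ≤ (j - i).val
      · exact .inl (far i j h1 h2)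
      · have := val_lt_three j i (by omega)
        tauto
    · have := val_lt_three i j (by omega)
      rw [eq_comm] at this
      tauto
  · exact far _ _ (by simpa using val_neg i 3)
      (by rw [val_natCast_eq hc (i + 3) i 3 (by omega) (by simp)])
  · exact far _ _ (by simpa using val_neg i 4)
      (by rw [val_natCast_eq hc (i + 4) i 4 (by omega) (by simp)]; omega)
  · rw [mul_comm, ← map_mul, ← map_pow, ← sub_eq_zero, ← map_sub, Ideal.Quotient.mkₐ_eq_mk,
      Ideal.Quotient.eq_zero_iff_mem]
    refine Ideal.subset_span (.inr ⟨i + 3, ?_⟩)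
    rw [show i + 3 - 1 = i + 2 by ring, add_sub_cancel_right]

/-! ### The functional on the quotient -/

/-- The exponent of the monomial `x_k ^ 2 x_{k-1} x_{k-2}`. -/
noncomputable def T (k : ZMod c) : ZMod c →₀ ℕ :=
  Finsupp.single k 2 + Finsupp.single (k - 1) 1 + Finsupp.single (k - 2) 1

open scoped Classical in
/-- The functional taking the value `1` on the monomials `x_k ^ 2 x_{k-1} x_{k-2}` and `0` on all
other monomials. -/
noncomputable def φ (c : ℕ) : MvPolynomial (ZMod c) ℚ →ₗ[ℚ] ℚ :=
  (basisMonomials (ZMod c) ℚ).constr ℚ fun s ↦ if ∃ k, s = T k then 1 else 0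

open scoped Classical in
theorem φ_monomial (s : ZMod c →₀ ℕ) : φ c (monomial s 1) = if ∃ k, s = T k then 1 else 0 := by
  rw [φ, show monomial s (1 : ℚ) = basisMonomials (ZMod c) ℚ s by rw [coe_basisMonomials],
    Module.Basis.constr_basis]

theorem T_apply [DecidableEq (ZMod c)] (k i : ZMod c) :
    T k i = (if k = i then 2 else 0) + (if k - 1 = i then 1 else 0) +
      (if k - 2 = i then 1 else 0) := by
  simp [T, Finsupp.single_apply]

theorem mem_window {k i : ZMod c} (h : 0 < T k i) : k = i ∨ k - 1 = i ∨ k - 2 = i := by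
  classical
  rw [T_apply] at h
  by_contra! hn
  simp [hn] at h

/-- Both monomials `s * x_i ^ 2` and `s * x_{i-1} x_{i-3}` are of the form
`x_k ^ 2 x_{k-1} x_{k-2}` exactly when `s = x_{i-1} x_{i-2}`, with `k = i` and `k = i - 1`
respectively. -/
theorem exists_T_iff (hc : 7 ≤ c) (s : ZMod c →₀ ℕ) (i : ZMod c) :
    (∃ k, s + Finsupp.single i 2 = T k) ↔
      ∃ k, s + (Finsupp.single (i - 1) 1 + Finsupp.single (i - 3) 1) = T k := by
  classical
  have n1 := natCast_ne_zero hc 1 (by omega) (by omega)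
  have n2 := natCast_ne_zero hc 2 (by omega) (by omega)
  have n3 := natCast_ne_zero hc 3 (by omega) (by omega)
  have n4 := natCast_ne_zero hc 4 (by omega) (by omega)
  push_cast at n1 n2 n3 n4
  have two : (Finsupp.single (i - 1) 2 : ZMod c →₀ ℕ) =
      Finsupp.single (i - 1) 1 + Finsupp.single (i - 1) 1 := by rw [← Finsupp.single_add]
  trans s = Finsupp.single (i - 1) 1 + Finsupp.single (i - 2) 1
  · constructor
    · rintro ⟨k, hk⟩
      have h := DFunLike.congr_fun hk i
      rw [T_apply, Finsupp.add_apply, Finsupp.single_eq_same] at h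
      have hki : k = i := by
        by_contra hne
        have : ¬ (k - 1 = i ∧ k - 2 = i) := fun ⟨h1, h2⟩ ↦ n1 (by linear_combination h1 - h2)
        rw [if_neg hne] at h
        split_ifs at h <;> first | omega | tauto
      subst hki
      apply add_right_cancel (b := Finsupp.single k 2)
      rw [hk, T]
      abel
    · rintro rfl
      exact ⟨i, by rw [T]; abel⟩
  · constructor
    · rintro rfl
      refine ⟨i - 1, ?_⟩
      rw [T, show i - 1 - 1 = i - 2 by ring, show i - 1 - 2 = i - 3 by ring, two]
      abel
    · rintro ⟨k, hk⟩
      have h1 : k = i - 1 ∨ k - 1 = i - 1 ∨ k - 2 = i - 1 := by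
        apply mem_window; rw [← hk]; simp
      have h3 : k = i - 3 ∨ k - 1 = i - 3 ∨ k - 2 = i - 3 := by
        apply mem_window; rw [← hk]; simp
      have hki : k = i - 1 := by grind
      subst hki
      apply add_right_cancel (b := Finsupp.single (i - 1) 1 + Finsupp.single (i - 3) 1)
      rw [hk, T, show i - 1 - 1 = i - 2 by ring, show i - 1 - 2 = i - 3 by ring, two]
      abel

theorem φ_mul_eq_zero_of_monomial (g : MvPolynomial (ZMod c) ℚ)
    (h : ∀ s, φ c (monomial s 1 * g) = 0) (q : MvPolynomial (ZMod c) ℚ) : φ c (q * g) = 0 := by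
  induction q using MvPolynomial.induction_on' with
  | monomial s r =>
    rw [show monomial s r = r • monomial s (1 : ℚ) by rw [smul_monomial, smul_eq_mul, mul_one],
      smul_mul_assoc, map_smul, h, smul_zero]
  | add p q hp hq => rw [add_mul, map_add, hp, hq, add_zero]

theorem φ_vanishes (hc : 7 ≤ c) [NeZero c] {p : MvPolynomial (ZMod c) ℚ}
    (hp : p ∈ cyclicQuadricIdeal c) : φ c p = 0 := by
  classical
  -- An ideal is closed under multiplication, so the statement is strengthened for the induction.
  suffices ∀ q, φ c (q * p) = 0 by simpa using this 1
  refine Submodule.span_induction (p := fun g _ ↦ ∀ q, φ c (q * g) = 0) ?_ ?_ ?_ ?_ hp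
  · rintro _ (⟨i, j, h1, h2, rfl⟩ | ⟨i, rfl⟩) <;> apply φ_mul_eq_zero_of_monomial <;> intro s
    · rw [X, X, monomial_mul, monomial_mul, one_mul, one_mul, φ_monomial, if_neg]
      rintro ⟨k, hk⟩
      refine not_far_of_window hc i j k h1 h2 (mem_window ?_) (mem_window ?_) <;> rw [← hk] <;>
        simp
    · rw [X_pow_eq_monomial, X, X, monomial_mul, mul_sub, monomial_mul, monomial_mul, one_mul,
        one_mul, map_sub, φ_monomial, φ_monomial]
      by_cases hT : ∃ k, s + Finsupp.single i 2 = T k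
      · rw [if_pos hT, if_pos ((exists_T_iff hc s i).1 hT), sub_self]
      · rw [if_neg hT, if_neg (mt (exists_T_iff hc s i).2 hT), sub_self]
  · simp
  · intro p q _ _ hp hq r
    rw [mul_add, map_add, hp, hq, add_zero]
  · intro r p _ hp q
    rw [smul_eq_mul, ← mul_assoc, hp]

theorem exists_functional (hc : 7 ≤ c) [NeZero c] :
    ∃ ψ : (MvPolynomial (ZMod c) ℚ ⧸ cyclicQuadricIdeal c) →ₗ[ℚ] ℚ,
      ψ (t (fun i ↦ Ideal.Quotient.mkₐ ℚ (cyclicQuadricIdeal c) (X i)) 0) = 1 := by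
  classical
  let ψ : (MvPolynomial (ZMod c) ℚ ⧸ cyclicQuadricIdeal c) →ₗ[ℚ] ℚ :=
    (Submodule.liftQ ((cyclicQuadricIdeal c).restrictScalars ℚ) (φ c)
      fun p hp ↦ φ_vanishes hc hp) ∘ₗ
      (Submodule.Quotient.restrictScalarsEquiv ℚ (cyclicQuadricIdeal c)).symm.toLinearMap
  have hψ : ∀ p, ψ (Ideal.Quotient.mkₐ ℚ (cyclicQuadricIdeal c) p) = φ c p := fun p ↦ rfl
  refine ⟨ψ, ?_⟩
  simp only [t]
  rw [← map_mul, ← map_pow, ← map_mul, hψ, X_pow_eq_monomial, X, X, monomial_mul, monomial_mul,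
    one_mul, one_mul, φ_monomial, if_pos]
  refine ⟨2, ?_⟩
  rw [T, sub_self, show (2 - 1 : ZMod c) = 0 + 1 by ring, zero_add, zero_add]
  abel

theorem hilbFun_eq (c : ℕ) [NeZero c] (d : ℕ) :
    hilbFun c d = Module.finrank ℚ
      (W (fun i : ZMod c ↦ Ideal.Quotient.mkₐ ℚ (cyclicQuadricIdeal c) (X i)) d) := by
  rw [hilbFun, W, ← homogeneousSubmodule_one_pow, Submodule.map_pow,
    homogeneousSubmodule_one_eq_span_X, Submodule.map_span, ← Set.range_comp]
  rfl

end CyclicQuadric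

/-- For `c ≥ 7`, the quadratic ring `S/J` has `h`-vector `(1, c, 2c, c, 1)`:
`H(0) = 1`, `H(1) = c`, `H(2) = 2c`, `H(3) = c`, `H(4) = 1`, and `H(d) = 0` for `d ≥ 5`. -/
theorem hilbFun_values (c : ℕ) (hc : 7 ≤ c) [NeZero c] :
    hilbFun c 0 = 1 ∧ hilbFun c 1 = c ∧ hilbFun c 2 = 2 * c ∧
    hilbFun c 3 = c ∧ hilbFun c 4 = 1 ∧ ∀ d : ℕ, 5 ≤ d → hilbFun c d = 0 := by
  obtain ⟨ψ, hψ⟩ := CyclicQuadric.exists_functional hc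
  simp only [CyclicQuadric.hilbFun_eq]
  exact CyclicQuadric.finrank_W (CyclicQuadric.rel_quotient hc) ψ hψ
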